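/- (Lemma 3.3, the case of the pure Dirichlet volume constraint, i.e. with empty Robin collar BΩ_i.) Let Ω ⊂ ℝ² be bounded, open and connected, let δ > 0, α > 0, Δt > 0, and let u⁰, u¹, …, u^M : Ω̄ ∪ BΩ_d → ℝ be bounded functions, each continuous on Ω̄ and on BΩ_d. If (u^{k+1}(x) − u^{k}(x))/Δt − α L_δ u^{k+1}(x) ≤ 0 for all x ∈ Ω and all 0 ≤ k ≤ M−1, then max_{0 ≤ k ≤ M} sup_{x ∈ Ω̄ ∪ BΩ_d} u^k(x) is at most the maximum of sup_{x ∈ Ω̄ ∪ BΩ_d} u⁰(x) and max_{0 ≤ k ≤ M} sup_{x ∈ BΩ_d} u^k(x). -/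

import Mathlib

/-!
The bound follows by induction on the time step. Write `C` for the right-hand side. Every point of
`closure Ω` outside `Ω` lies in the collar (`closure_diff_subset_collar`), where `u (k + 1) ≤ C`,
so a value of `u (k + 1)` exceeding `C` can only occur in `Ω`. On
the compact set `closure Ω` the continuous function `u (k + 1)` has a maximum point `x₀`. If
`x₀ ∉ Ω`, or if the maximum is at most `C`, nothing remains to be shown. Otherwise `x₀ ∈ Ω`
maximizes `u (k + 1)` over all of `dom Ω δ`, which contains the ball of radius `δ` about `x₀`
(`ball_subset_dom`), so `L_δ u (k + 1) x₀ ≤ 0` (`Lop_nonpos_of_forall_le`). The backward Euler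
inequality then gives `u (k + 1) x₀ ≤ u k x₀ ≤ C`.
-/

open MeasureTheory Real RealInnerProductSpace

noncomputable section

abbrev R2 : Type := EuclideanSpace ℝ (Fin 2)

/-- The rescaled kernel `J_δ(r) = δ⁻⁴ J(r/δ)`. -/
def Jd (J : ℝ → ℝ) (δ : ℝ) : ℝ → ℝ := fun r => (1 / δ ^ 4) * J (r / δ)

/-- The nonlocal diffusion operator `L_δ u(x) = 2 ∫_{B(x,δ)} J_δ(|x-y|)(u(y)-u(x)) dy`
(with scaled kernel `K`). -/
def Lop (K : ℝ → ℝ) (δ : ℝ) (u : R2 → ℝ) (x : R2) : ℝ :=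
  2 * ∫ y in Metric.ball x δ, K ‖x - y‖ * (u y - u x)

/-- The Dirichlet collar `BΩ_d = {x ∉ Ω : dist(x,Ω) ≤ δ}`. -/
def collar (Ω : Set R2) (δ : ℝ) : Set R2 :=
  {x : R2 | x ∉ Ω ∧ Metric.infDist x Ω ≤ δ}

/-- The full computational domain `Ω̄ ∪ BΩ_d`. -/
def dom (Ω : Set R2) (δ : ℝ) : Set R2 := closure Ω ∪ collar Ω δ

lemma closure_diff_subset_collar {Ω : Set R2} {δ : ℝ} (hδ : 0 < δ) {x : R2}
    (hx : x ∈ closure Ω) (hxΩ : x ∉ Ω) : x ∈ collar Ω δ :=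
  ⟨hxΩ, by rw [Metric.infDist_zero_of_mem_closure hx]; exact hδ.le⟩

lemma ball_subset_dom {Ω : Set R2} {δ : ℝ} {x : R2} (hx : x ∈ Ω) :
    Metric.ball x δ ⊆ dom Ω δ := by
  intro y hy
  by_cases hyΩ : y ∈ Ω
  · exact Or.inl (subset_closure hyΩ)
  · exact Or.inr ⟨hyΩ, (Metric.infDist_le_dist_of_mem hx).trans (Metric.mem_ball.1 hy).le⟩

/-- The nonlocal operator is nonpositive at a maximum point. No integrability is needed: the
integral of a nonpositive function is nonpositive also under the convention that it vanishes when
the integrand is not integrable. -/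
lemma Lop_nonpos_of_forall_le {K : ℝ → ℝ} (hK : ∀ r, 0 ≤ K r) {δ : ℝ} {u : R2 → ℝ} {x : R2}
    (h : ∀ y ∈ Metric.ball x δ, u y ≤ u x) : Lop K δ u x ≤ 0 := by
  have : ∫ y in Metric.ball x δ, K ‖x - y‖ * (u y - u x) ≤ 0 :=
    setIntegral_nonpos Metric.isOpen_ball.measurableSet fun y hy =>
      mul_nonpos_of_nonneg_of_nonpos (hK _) (sub_nonpos.2 (h y hy))
  unfold Lop
  linarith

/-- Lemma 3.3 (discrete-in-time nonlocal maximum principle for the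
backward Euler scheme), pure Dirichlet volume constraint. -/
theorem statement6
    (J : ℝ → ℝ)
    (hJ_nonneg : ∀ r, 0 ≤ J r)
    (hJ_supp : ∀ r : ℝ, 1 < r → J r = 0)
    (hJ_mono : AntitoneOn J (Set.Ici 0))
    (hJ_pos : ∀ r ∈ Set.Icc (0:ℝ) 1, 0 < J r)
    (hJ_int : Integrable (fun z : R2 => J ‖z‖))
    (hJ_norm : (∫ z : R2, J ‖z‖ * ‖z‖ ^ 2) = 2)
    (Ω : Set R2) (hΩo : IsOpen Ω) (hΩb : Bornology.IsBounded Ω) (hΩc : IsConnected Ω)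
    (δ α Δt : ℝ) (hδ : 0 < δ) (hα : 0 < α) (hΔt : 0 < Δt)
    (M : ℕ) (u : ℕ → R2 → ℝ)
    (hbdd : ∀ k ≤ M, ∃ B : ℝ, ∀ x ∈ dom Ω δ, |u k x| ≤ B)
    (hcont : ∀ k ≤ M, ContinuousOn (u k) (closure Ω) ∧ ContinuousOn (u k) (collar Ω δ))
    (hsub : ∀ k < M, ∀ x ∈ Ω,
      (u (k + 1) x - u k x) / Δt - α * Lop (Jd J δ) δ (u (k + 1)) x ≤ 0) :
    ∀ k ≤ M, ∀ x ∈ dom Ω δ,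
      u k x ≤ max
        (sSup (u 0 '' dom Ω δ))
        (sSup {v : ℝ | ∃ k' ≤ M, ∃ y ∈ collar Ω δ, u k' y = v}) := by
  set A := sSup (u 0 '' dom Ω δ)
  set S : Set ℝ := {v : ℝ | ∃ k' ≤ M, ∃ y ∈ collar Ω δ, u k' y = v} with hS
  have hSbdd : BddAbove S := by
    have hunion : S = ⋃ k' ∈ Set.Iic M, u k' '' collar Ω δ := by
      ext v
      simp [hS]
    rw [hunion, (Set.finite_Iic M).bddAbove_biUnion]
    intro k' hk'
    obtain ⟨B, hB⟩ := hbdd k' hk'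
    refine ⟨B, ?_⟩
    rintro _ ⟨y, hy, rfl⟩
    exact (abs_le.1 (hB y (Or.inr hy))).2
  have hcollar : ∀ k ≤ M, ∀ y ∈ collar Ω δ, u k y ≤ max A (sSup S) := fun k hk y hy =>
    (le_csSup hSbdd ⟨k, hk, y, hy, rfl⟩).trans (le_max_right _ _)
  have hK : ∀ r, 0 ≤ Jd J δ r := fun r => mul_nonneg (by positivity) (hJ_nonneg _)
  intro k
  induction k with
  | zero =>
    intro hk x hx
    obtain ⟨B, hB⟩ := hbdd 0 hk
    refine (le_csSup (s := u 0 '' dom Ω δ) ⟨B, ?_⟩ ⟨x, hx, rfl⟩).trans (le_max_left _ _)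
    rintro _ ⟨y, hy, rfl⟩
    exact (abs_le.1 (hB y hy)).2
  | succ k ih =>
    intro hk x hx
    obtain ⟨x₀, hx₀, hmax⟩ := hΩb.isCompact_closure.exists_isMaxOn
      hΩc.nonempty.closure (hcont (k + 1) hk).1
    have hx₀C : u (k + 1) x₀ ≤ max A (sSup S) := by
      by_cases hx₀Ω : x₀ ∈ Ω
      · by_contra! hlt
        have hL : Lop (Jd J δ) δ (u (k + 1)) x₀ ≤ 0 := by
          refine Lop_nonpos_of_forall_le hK fun y hy => ?_
          rcases ball_subset_dom hx₀Ω hy with hy | hy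
          · exact hmax hy
          · exact (hcollar _ hk y hy).trans hlt.le
        have hEuler := hsub k hk x₀ hx₀Ω
        have hαL := mul_nonpos_of_nonneg_of_nonpos hα.le hL
        have hquot : (u (k + 1) x₀ - u k x₀) / Δt ≤ 0 := by linarith
        have hdiff : u (k + 1) x₀ - u k x₀ ≤ 0 := by
          simpa using (div_le_iff₀ hΔt).1 hquot
        have hprev := ih (by omega) x₀ (Or.inl hx₀)
        linarith
      · exact hcollar _ hk x₀ (closure_diff_subset_collar hδ hx₀ hx₀Ω)
    rcases hx with hx | hx
    · exact (hmax hx).trans hx₀C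
    · exact hcollar _ hk x hx
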